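/- Let A > 0, ω > 0 and R > 0 with ω·R ≥ 1, and define σ(x) = A·(sinh(ω·(R − x))/sinh(ω·R) − 1). Then σ(0) = 0, and for every x ∈ [0, R] one has |σ'(x)| ≤ A·coth(1)·ω and consequently |σ(x)| ≤ A·coth(1)·ω·x. -/

import Mathlib

/-!
The derivative of `σ` at `x` is `-A ω cosh(ω(R - x)) / sinh(ωR)`. Since `cosh` is even and
increasing in `|·|`, it is largest in absolute value where `|R - x| = |R|`, which gives the bound
`|A| |ω| coth(ωR)`; and `coth` decreases on `(0, ∞)`, so `coth(ωR) ≤ coth c` whenever `c ≤ ωR`.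
The bound on `σ` is the mean value inequality started at `σ 0 = 0`.
-/

theorem antitoneOn_cosh_div_sinh :
    AntitoneOn (fun x : ℝ => Real.cosh x / Real.sinh x) (Set.Ioi 0) := by
  intro x hx y hy hxy
  have hsub : 0 ≤ Real.sinh (y - x) := Real.sinh_nonneg_iff.2 (sub_nonneg.2 hxy)
  rw [Real.sinh_sub] at hsub
  rw [div_le_div_iff₀ (Real.sinh_pos_iff.2 hy) (Real.sinh_pos_iff.2 hx)]
  linarith

theorem Icc_zero_subset_closedBall_abs (R : ℝ) : Set.Icc 0 R ⊆ Metric.closedBall R |R| := by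
  intro x hx
  rw [Metric.mem_closedBall', Real.dist_eq]
  exact abs_le_abs_of_nonneg (sub_nonneg.2 hx.2) (sub_le_self R hx.1)

/-- The corrector `σ` with amplitude `A`, rate `ω` and length `R`, for real parameters of any sign.
It is a genuine quotient only for `ω * R ≠ 0`; otherwise it has the junk value `-A` everywhere. -/
noncomputable def corrector (A ω R x : ℝ) : ℝ :=
  A * (Real.sinh (ω * (R - x)) / Real.sinh (ω * R) - 1)

section Corrector

variable {A ω R c x : ℝ}

theorem corrector_apply_zero (hωR : ω * R ≠ 0) : corrector A ω R 0 = 0 := by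
  rw [corrector, sub_zero, div_self (Real.sinh_ne_zero.2 hωR), sub_self, mul_zero]

theorem hasDerivAt_corrector (A ω R x : ℝ) :
    HasDerivAt (corrector A ω R)
      (-(A * (Real.cosh (ω * (R - x)) / Real.sinh (ω * R)) * ω)) x := by
  have hinner : HasDerivAt (fun y => ω * (R - y)) (ω * -1) x :=
    ((hasDerivAt_id x).const_sub R).const_mul ω
  exact (((hinner.sinh.div_const _).sub_const 1).const_mul A).congr_deriv (by ring)

theorem cosh_mul_sub_le_cosh_mul (ω : ℝ) (hx : x ∈ Metric.closedBall R |R|) :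
    Real.cosh (ω * (R - x)) ≤ Real.cosh (ω * R) := by
  rw [Metric.mem_closedBall', Real.dist_eq] at hx
  rw [Real.cosh_le_cosh, abs_mul, abs_mul]
  gcongr

theorem abs_deriv_corrector_le (hωR : 0 < ω * R) (hx : x ∈ Metric.closedBall R |R|) :
    |deriv (corrector A ω R) x| ≤ |A| * (Real.cosh (ω * R) / Real.sinh (ω * R)) * |ω| := by
  have hsinh : 0 < Real.sinh (ω * R) := Real.sinh_pos_iff.2 hωR
  rw [(hasDerivAt_corrector A ω R x).deriv, abs_neg, abs_mul, abs_mul, abs_div,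
    abs_of_pos (Real.cosh_pos _), abs_of_pos hsinh]
  gcongr
  exact cosh_mul_sub_le_cosh_mul ω hx

theorem sigma_estimates_general (hc : 0 < c) (hωR : c ≤ ω * R) :
    corrector A ω R 0 = 0 ∧
    ∀ x ∈ Metric.closedBall R |R|,
      |deriv (corrector A ω R) x| ≤ |A| * (Real.cosh c / Real.sinh c) * |ω| ∧
      |corrector A ω R x| ≤ |A| * (Real.cosh c / Real.sinh c) * |ω| * |x| := by
  have hωR_pos : 0 < ω * R := hc.trans_le hωR
  have hzero : corrector A ω R 0 = 0 := corrector_apply_zero hωR_pos.ne'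
  have hderiv : ∀ y ∈ Metric.closedBall R |R|,
      |deriv (corrector A ω R) y| ≤ |A| * (Real.cosh c / Real.sinh c) * |ω| := fun y hy => calc
    |deriv (corrector A ω R) y| ≤ |A| * (Real.cosh (ω * R) / Real.sinh (ω * R)) * |ω| :=
      abs_deriv_corrector_le hωR_pos hy
    _ ≤ |A| * (Real.cosh c / Real.sinh c) * |ω| := by
      gcongr |A| * ?_ * |ω|
      exact antitoneOn_cosh_div_sinh hc hωR_pos hωR
  refine ⟨hzero, fun x hx => ⟨hderiv x hx, ?_⟩⟩
  have hzero_mem : (0 : ℝ) ∈ Metric.closedBall R |R| := by simp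
  simpa [hzero] using (convex_closedBall R |R|).norm_image_sub_le_of_norm_deriv_le
    (fun y _ => (hasDerivAt_corrector A ω R y).differentiableAt) hderiv hzero_mem hx

end Corrector

/-- **Estimate (2.7) for the corrector `σ`.** Let `A > 0`, `ω > 0`, `R > 0` with
`ω R ≥ 1`, and `σ x = A (sinh(ω(R−x))/sinh(ωR) − 1)`. Then `σ 0 = 0`,
`|σ'(x)| ≤ A coth(1) ω` and `|σ(x)| ≤ A coth(1) ω x` for all `x ∈ [0, R]`,
where `coth 1 = cosh 1 / sinh 1`. -/
theorem sigma_estimates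
    (A ω R : ℝ) (hA : 0 < A) (hω : 0 < ω) (hR : 0 < R) (hωR : 1 ≤ ω * R)
    (σ : ℝ → ℝ)
    (hσ : ∀ x : ℝ, σ x = A * (Real.sinh (ω * (R - x)) / Real.sinh (ω * R) - 1)) :
    σ 0 = 0 ∧
    ∀ x ∈ Set.Icc (0 : ℝ) R,
      |deriv σ x| ≤ A * (Real.cosh 1 / Real.sinh 1) * ω ∧
      |σ x| ≤ A * (Real.cosh 1 / Real.sinh 1) * ω * x := by
  obtain rfl : σ = corrector A ω R := funext hσ
  refine (sigma_estimates_general one_pos hωR).imp_right fun hbound x hx => ?_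
  simpa only [abs_of_pos hA, abs_of_pos hω, abs_of_nonneg hx.1] using
    hbound x (Icc_zero_subset_closedBall_abs R hx)
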